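/- arXiv:2404.06696 — 3 statements merged into one kernel-verified Lean document; each statement's English description precedes it below -/
import Mathlib

section
/- Let θ ∈ ℝ, θ ≠ 0, A ∈ ℝ^{d×d}, B ∈ ℝ^{d×m}, C ∈ ℝ^{k×d}, σ ∈ ℝ^{d×n}, and let R ∈ ℝ^{m×m} be symmetric positive definite. Let P : [0,T] → ℝ^{d×d} be differentiable with P_t invertible for every t ∈ [0,T], and suppose P satisfies the risk-sensitive backward differential Riccati equation −(d/dt)P_t = AᵀP_t + P_tA + CᵀC − P_t (B R⁻¹ Bᵀ − θ σσᵀ) P_t. Then S_t := (|θ| P_t)⁻¹ is differentiable and satisfies (d/dt)S_t = A S_t + S_t Aᵀ + |θ| S_t CᵀC S_t − (1/|θ|)(B R⁻¹ Bᵀ − θ σσᵀ) for all t ∈ [0,T]. -/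
open Matrix

/-!
Write `𝓡(x) = d x + x a + q - x g x` for the Riccati map with coefficients `(a, d, q, g)`. If
`-p' = 𝓡(p)` with `p` invertible, then `(p⁻¹)' = -p⁻¹ p' p⁻¹ = p⁻¹ 𝓡(p) p⁻¹`, and this is again a
Riccati map, with coefficients `(d, a, -g, -q)`, evaluated at `p⁻¹`. Rescaling `p` to `c p`
replaces `q` by `c q` and `g` by `c⁻¹ g`; the theorem is the case `c = |θ|`.
-/

open scoped Ring

section RiccatiMap

variable {R : Type*} [Ring R]

/-- The quadratic map of the Riccati differential equation `-x' = riccatiMap a d q g x`. The linear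
quadratic equations have `d = aᵀ`; independent `a` and `d` let inversion exchange the two. -/
def riccatiMap (a d q g x : R) : R :=
  d * x + x * a + q - x * g * x

theorem smul_riccatiMap {K : Type*} [Semifield K] [Algebra K R] {c : K} (hc : c ≠ 0)
    (a d q g x : R) :
    c • riccatiMap a d q g x = riccatiMap a d (c • q) (c⁻¹ • g) (c • x) := by
  simp only [riccatiMap, smul_add, smul_sub, mul_smul_comm, smul_mul_assoc, inv_smul_smul₀ hc]

theorem ringInverse_mul_riccatiMap_mul_ringInverse {x : R} (hx : IsUnit x) (a d q g : R) :
    x⁻¹ʳ * riccatiMap a d q g x * x⁻¹ʳ = riccatiMap d a (-g) (-q) x⁻¹ʳ := by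
  have hleft (y : R) : x⁻¹ʳ * (x * y) = y := Ring.inverse_mul_cancel_left x y hx
  have hright : x * x⁻¹ʳ = 1 := Ring.mul_inverse_cancel x hx
  simp only [riccatiMap, mul_add, add_mul, mul_sub, sub_mul, mul_assoc, hleft, hright, mul_one,
    neg_mul, mul_neg]
  abel

end RiccatiMap

section NormedAlgebra

variable {𝕜 R : Type*} [NontriviallyNormedField 𝕜] [NormedRing R] [HasSummableGeomSeries R]
  [NormedAlgebra 𝕜 R] {f : 𝕜 → R} {s : Set 𝕜} {t : 𝕜}

theorem hasDerivWithinAt_ringInverse {f' : R} (hf : HasDerivWithinAt f f' s t)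
    (hft : IsUnit (f t)) :
    HasDerivWithinAt (fun τ => (f τ)⁻¹ʳ) (-((f t)⁻¹ʳ * f' * (f t)⁻¹ʳ)) s t := by
  obtain ⟨u, hu⟩ := hft
  simpa [Function.comp_def, ← hu] using
    (hasFDerivAt_ringInverse (𝕜 := 𝕜) u).comp_hasDerivWithinAt_of_eq t hf hu

theorem hasDerivWithinAt_ringInverse_of_riccati {a d q g : R}
    (hf : HasDerivWithinAt f (-riccatiMap a d q g (f t)) s t) (hft : IsUnit (f t)) :
    HasDerivWithinAt (fun τ => (f τ)⁻¹ʳ) (riccatiMap d a (-g) (-q) (f t)⁻¹ʳ) s t := by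
  rw [← ringInverse_mul_riccatiMap_mul_ringInverse hft]
  simpa only [mul_neg, neg_mul, neg_neg] using hasDerivWithinAt_ringInverse hf hft

end NormedAlgebra

section Matrix

variable {𝕜 : Type*} [NontriviallyNormedField 𝕜] {s : Set 𝕜} {t : 𝕜}

theorem hasDerivWithinAt_matrix_iff {ι κ : Type*} [Finite ι] [Finite κ]
    {M : 𝕜 → Matrix ι κ 𝕜} {M' : Matrix ι κ 𝕜} :
    HasDerivWithinAt M M' s t ↔ ∀ i j, HasDerivWithinAt (fun τ => M τ i j) (M' i j) s t :=
  have := Fintype.ofFinite ι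
  have := Fintype.ofFinite κ
  hasDerivWithinAt_pi.trans <| forall_congr' fun _ => hasDerivWithinAt_pi

variable [CompleteSpace 𝕜] {ι : Type*} [Fintype ι] [DecidableEq ι] {A D Q G : Matrix ι ι 𝕜}
  {P : 𝕜 → Matrix ι ι 𝕜}

theorem hasDerivWithinAt_matrix_inv_of_riccati
    (hP : HasDerivWithinAt P (-riccatiMap A D Q G (P t)) s t) (hPt : IsUnit (P t)) :
    HasDerivWithinAt (fun τ => (P τ)⁻¹) (riccatiMap D A (-G) (-Q) (P t)⁻¹) s t := by
  simp only [nonsing_inv_eq_ringInverse]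
  let : NormedRing (Matrix ι ι 𝕜) := Matrix.linftyOpNormedRing
  let : NormedAlgebra 𝕜 (Matrix ι ι 𝕜) := Matrix.linftyOpNormedAlgebra
  -- The uniformity of this norm is the entrywise one, but instance search does not unfold so far.
  have : @CompleteSpace (Matrix ι ι 𝕜) PseudoMetricSpace.toUniformSpace :=
    Matrix.instCompleteSpace ι ι 𝕜
  exact hasDerivWithinAt_ringInverse_of_riccati hP hPt

theorem leqg_dual_riccati_general {c : 𝕜} (hc : c ≠ 0) {P' : Matrix ι ι 𝕜}
    (hP : HasDerivWithinAt P P' s t) (hPt : IsUnit (P t))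
    (hric : -P' = D * P t + P t * A + Q - P t * G * P t) :
    HasDerivWithinAt (fun τ => (c • P τ)⁻¹)
      (A * (c • P t)⁻¹ + (c • P t)⁻¹ * D + c • ((c • P t)⁻¹ * Q * (c • P t)⁻¹) - c⁻¹ • G) s t := by
  have hscaled : HasDerivWithinAt (fun τ => c • P τ)
      (-riccatiMap A D (c • Q) (c⁻¹ • G) (c • P t)) s t := by
    rw [← smul_riccatiMap hc, riccatiMap, ← hric, smul_neg, neg_neg]
    exact hasDerivWithinAt_matrix_iff.2 fun i j =>
      (hasDerivWithinAt_matrix_iff.1 hP i j).const_mul c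
  have hunit : IsUnit (c • P t) := hPt.smul (Units.mk0 c hc)
  convert hasDerivWithinAt_matrix_inv_of_riccati hscaled hunit using 1
  simp only [riccatiMap, mul_neg, neg_mul, mul_smul_comm, smul_mul_assoc, sub_neg_eq_add]
  abel

end Matrix

/-- if `P` solves the risk-sensitive backward differential Riccati equation
and is invertible, then `S = (|θ| P)⁻¹` is differentiable and solves the dual
differential Riccati equation. -/
theorem leqg_dual_riccati
    (d m k n : ℕ) (T : ℝ) (hT : 0 < T)
    (θ : ℝ) (hθ : θ ≠ 0)
    (A : Matrix (Fin d) (Fin d) ℝ) (B : Matrix (Fin d) (Fin m) ℝ)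
    (C : Matrix (Fin k) (Fin d) ℝ) (σ : Matrix (Fin d) (Fin n) ℝ)
    (R : Matrix (Fin m) (Fin m) ℝ) (hR : R.PosDef)
    (P P' : ℝ → Matrix (Fin d) (Fin d) ℝ)
    (hP : ∀ t ∈ Set.Icc (0 : ℝ) T, ∀ i j, HasDerivAt (fun s => P s i j) (P' t i j) t)
    (hPinv : ∀ t ∈ Set.Icc (0 : ℝ) T, IsUnit (P t).det)
    (hric : ∀ t ∈ Set.Icc (0 : ℝ) T,
      -P' t = Aᵀ * P t + P t * A + Cᵀ * C
        - P t * (B * R⁻¹ * Bᵀ - θ • (σ * σᵀ)) * P t) :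
    ∀ t ∈ Set.Icc (0 : ℝ) T, ∀ i j,
      HasDerivAt (fun s => (|θ| • P s)⁻¹ i j)
        ((A * (|θ| • P t)⁻¹ + (|θ| • P t)⁻¹ * Aᵀ
          + |θ| • ((|θ| • P t)⁻¹ * (Cᵀ * C) * (|θ| • P t)⁻¹)
          - |θ|⁻¹ • (B * R⁻¹ * Bᵀ - θ • (σ * σᵀ))) i j) t := by
  simp only [← hasDerivWithinAt_univ, ← hasDerivWithinAt_matrix_iff] at hP ⊢
  exact fun t ht => leqg_dual_riccati_general (abs_ne_zero.2 hθ) (hP t ht)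
    ((isUnit_iff_isUnit_det _).2 (hPinv t ht)) (hric t ht)
end

section
/- Let S ∈ ℝ^{d×d} be symmetric positive definite, n ∈ ℝ^d, C ∈ ℝ^{k×d}, and λ > 0. Let ρ : ℝ^d → (0,∞) be the Gaussian density ρ(z) = (2π)^{−d/2} (det S)^{−1/2} exp(−½ (z−n)ᵀ S⁻¹ (z−n)). Define the vector field I(z) := (λ/2) S CᵀC (z + n), the function h(z) := (λ/2)|Cz|², and the constant ĥ := (λ/2) tr(CᵀC (S + n nᵀ)). Then for every z ∈ ℝ^d, −∇·(ρ I)(z) = ρ(z) (h(z) − ĥ). -/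
open Matrix

/-- Partial derivative in direction `i`. -/
noncomputable def pd {d : ℕ} (i : Fin d) (f : (Fin d → ℝ) → ℝ) (x : Fin d → ℝ) : ℝ :=
  fderiv ℝ f x (Pi.single i 1)

/-- Spatial gradient. -/
noncomputable def grad {d : ℕ} (f : (Fin d → ℝ) → ℝ) (x : Fin d → ℝ) : Fin d → ℝ :=
  fun i => pd i f x

/-- Spatial Hessian as a matrix. -/
noncomputable def hess {d : ℕ} (f : (Fin d → ℝ) → ℝ) (x : Fin d → ℝ) :
    Matrix (Fin d) (Fin d) ℝ :=
  Matrix.of fun i j => pd i (fun y => pd j f y) x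

/-- Divergence of a vector field. -/
noncomputable def dvg {d : ℕ} (v : (Fin d → ℝ) → (Fin d → ℝ)) (x : Fin d → ℝ) : ℝ :=
  ∑ i, pd i (fun y => v y i) x

/-!
Write `Q = (λ/2) CᵀC`, so that `I = S Q (z + n)`. The Gaussian satisfies `∇ρ = -ρ S⁻¹ (z - n)`, and
in `∇ρ · I` the factor `S⁻¹` cancels the factor `S`, so the product rule gives
`-∇·(ρ I) = -ρ ∇·I - ∇ρ · I = ρ (-tr (S Q) + zᵀ Q z - nᵀ Q n)`. The constant terms combine to
`-tr (Q (S + n nᵀ)) = -ĥ`.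
-/

section MatrixIdentities

variable {ι R : Type*} [Fintype ι] [CommRing R]

theorem dotProduct_mulVec_comm_of_isSymm {Q : Matrix ι ι R} (hQ : Q.IsSymm) (x y : ι → R) :
    x ⬝ᵥ Q *ᵥ y = y ⬝ᵥ Q *ᵥ x := by
  rw [← dotProduct_transpose_mulVec, hQ.eq]

theorem sub_dotProduct_mulVec_add_of_isSymm {Q : Matrix ι ι R} (hQ : Q.IsSymm) (x y : ι → R) :
    (x - y) ⬝ᵥ Q *ᵥ (x + y) = x ⬝ᵥ Q *ᵥ x - y ⬝ᵥ Q *ᵥ y := by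
  rw [mulVec_add, sub_dotProduct, dotProduct_add, dotProduct_add,
    dotProduct_mulVec_comm_of_isSymm hQ y x]
  ring

theorem inv_mulVec_dotProduct_mul_mulVec [DecidableEq ι] {S : Matrix ι ι R} (hS : S.IsSymm)
    (hdet : IsUnit S.det) (Q : Matrix ι ι R) (x y : ι → R) :
    S⁻¹ *ᵥ x ⬝ᵥ (S * Q) *ᵥ y = x ⬝ᵥ Q *ᵥ y := by
  rw [← mulVec_mulVec, dotProduct_mulVec_comm_of_isSymm hS, mulVec_mulVec,
    mul_nonsing_inv S hdet, one_mulVec, dotProduct_comm]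

theorem trace_mul_add_vecMulVec (Q S : Matrix ι ι R) (x y : ι → R) :
    (Q * (S + vecMulVec x y)).trace = (S * Q).trace + y ⬝ᵥ Q *ᵥ x := by
  rw [mul_add, trace_add, trace_mul_comm Q S, mul_vecMulVec, trace_vecMulVec, dotProduct_comm]

end MatrixIdentities

section VectorCalculus

variable {d : ℕ} {f : (Fin d → ℝ) → ℝ} {v : (Fin d → ℝ) → (Fin d → ℝ)} {z : Fin d → ℝ}

theorem grad_const_mul (c : ℝ) (hf : DifferentiableAt ℝ f z) :
    grad (fun y => c * f y) z = c • grad f z := by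
  ext i
  simp [grad, pd, fderiv_const_mul hf]

theorem grad_exp (hf : DifferentiableAt ℝ f z) :
    grad (fun y => Real.exp (f y)) z = Real.exp (f z) • grad f z := by
  ext i
  simp [grad, pd, fderiv_exp hf]

theorem grad_comp_sub_const (f : (Fin d → ℝ) → ℝ) (n z : Fin d → ℝ) :
    grad (fun y => f (y - n)) z = grad f (z - n) := by
  ext i
  simp only [grad, pd, fderiv_comp_sub]

theorem grad_dotProduct_mulVec_self (Q : Matrix (Fin d) (Fin d) ℝ) (z : Fin d → ℝ) :
    grad (fun y => y ⬝ᵥ Q *ᵥ y) z = (Q + Qᵀ) *ᵥ z := by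
  ext i
  let B : (Fin d → ℝ) →L[ℝ] (Fin d → ℝ) →L[ℝ] ℝ :=
    LinearMap.toContinuousBilinearMap (toLinearMap₂' ℝ Q : (Fin d → ℝ) →ₗ[ℝ] (Fin d → ℝ) →ₗ[ℝ] ℝ)
  have hB (x y : Fin d → ℝ) : B x y = x ⬝ᵥ Q *ᵥ y := toLinearMap₂'_apply' Q x y
  have hpd : pd i (fun y => B y y) z = B z (Pi.single i 1) + B (Pi.single i 1) z := by
    have hfderiv : HasFDerivAt (fun y => B y y) _ z :=
      B.hasFDerivAt_of_bilinear (hasFDerivAt_id z) (hasFDerivAt_id z)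
    simp [pd, hfderiv.fderiv]
  simp only [hB] at hpd
  rw [grad, hpd, dotProduct_mulVec, dotProduct_single_one, single_one_dotProduct, add_mulVec,
    mulVec_transpose, Pi.add_apply, add_comm]

theorem dvg_smul (hf : DifferentiableAt ℝ f z) (hv : DifferentiableAt ℝ v z) :
    dvg (fun y => f y • v y) z = f z * dvg v z + grad f z ⬝ᵥ v z := by
  have hpd (i : Fin d) : pd i (fun y => f y * v y i) z = f z * pd i (fun y => v y i) z +
      pd i f z * v z i := by
    simp [pd, fderiv_fun_mul hf (differentiableAt_pi.1 hv i), mul_comm (v z i)]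
  simp only [dvg, grad, dotProduct, Pi.smul_apply, smul_eq_mul, hpd, Finset.sum_add_distrib,
    Finset.mul_sum]

theorem differentiable_mulVec_add_const {ι κ : Type*} [Fintype ι] [Finite κ] (A : Matrix κ ι ℝ)
    (n : ι → ℝ) : Differentiable ℝ fun y => A *ᵥ (y + n) :=
  have := Fintype.ofFinite κ
  A.mulVecLin.toContinuousLinearMap.differentiable.comp (differentiable_id.add_const n)

theorem dvg_mulVec_add_const (A : Matrix (Fin d) (Fin d) ℝ) (n z : Fin d → ℝ) :
    dvg (fun y => A *ᵥ (y + n)) z = A.trace := by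
  refine Finset.sum_congr rfl fun i _ => ?_
  let L : (Fin d → ℝ) →L[ℝ] ℝ := (LinearMap.proj i ∘ₗ A.mulVecLin).toContinuousLinearMap
  calc pd i (fun y => (A *ᵥ (y + n)) i) z = fderiv ℝ (fun y => L (y + n)) z (Pi.single i 1) := rfl
    _ = L (Pi.single i 1) := by rw [fderiv_comp_add_right, L.fderiv]
    _ = A i i := by simp [L]

end VectorCalculus

/-- The unnormalised Gaussian density with mean `n` and precision matrix (inverse covariance)
`P`. The normalising constant is left out, since the Poisson equation is linear in the density. -/
noncomputable def gaussianWeight {ι : Type*} [Fintype ι] (P : Matrix ι ι ℝ) (n z : ι → ℝ) : ℝ :=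
  Real.exp (-(1 / 2) * ((z - n) ⬝ᵥ P *ᵥ (z - n)))

theorem differentiable_dotProduct_mulVec_sub_const {ι : Type*} [Fintype ι] (P : Matrix ι ι ℝ)
    (n : ι → ℝ) : Differentiable ℝ fun y => (y - n) ⬝ᵥ P *ᵥ (y - n) := by
  unfold dotProduct mulVec dotProduct
  fun_prop

theorem differentiable_gaussianWeight {ι : Type*} [Fintype ι] (P : Matrix ι ι ℝ) (n : ι → ℝ) :
    Differentiable ℝ (gaussianWeight P n) :=
  ((differentiable_dotProduct_mulVec_sub_const P n).const_mul _).exp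

theorem grad_gaussianWeight {d : ℕ} {P : Matrix (Fin d) (Fin d) ℝ} (hP : P.IsSymm)
    (n z : Fin d → ℝ) :
    grad (gaussianWeight P n) z = -gaussianWeight P n z • P *ᵥ (z - n) := by
  have hquad : DifferentiableAt ℝ (fun y => (y - n) ⬝ᵥ P *ᵥ (y - n)) z :=
    differentiable_dotProduct_mulVec_sub_const P n z
  have hgrad : grad (fun y => (y - n) ⬝ᵥ P *ᵥ (y - n)) z = (2 : ℝ) • P *ᵥ (z - n) := by
    rw [grad_comp_sub_const (fun y => y ⬝ᵥ P *ᵥ y), grad_dotProduct_mulVec_self, hP.eq,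
      add_mulVec, two_smul]
  unfold gaussianWeight
  rw [grad_exp (hquad.const_mul _), grad_const_mul _ hquad, hgrad]
  module

theorem gaussian_poisson_interaction_general {d : ℕ} {S Q : Matrix (Fin d) (Fin d) ℝ}
    (hS : S.IsSymm) (hdet : IsUnit S.det) (hQ : Q.IsSymm) (c : ℝ) (n z : Fin d → ℝ) :
    -(dvg (fun y => (c * gaussianWeight S⁻¹ n y) • (S * Q) *ᵥ (y + n)) z) =
      c * gaussianWeight S⁻¹ n z * (z ⬝ᵥ Q *ᵥ z - (Q * (S + vecMulVec n n)).trace) := by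
  have hP : S⁻¹.IsSymm := by rw [IsSymm, transpose_nonsing_inv, hS.eq]
  have hw : DifferentiableAt ℝ (gaussianWeight S⁻¹ n) z := differentiable_gaussianWeight _ n z
  have hdot : grad (gaussianWeight S⁻¹ n) z ⬝ᵥ (S * Q) *ᵥ (z + n) =
      -gaussianWeight S⁻¹ n z * (z ⬝ᵥ Q *ᵥ z - n ⬝ᵥ Q *ᵥ n) := by
    rw [grad_gaussianWeight hP n z, smul_dotProduct, inv_mulVec_dotProduct_mul_mulVec hS hdet,
      sub_dotProduct_mulVec_add_of_isSymm hQ, smul_eq_mul]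
  rw [dvg_smul (hw.const_mul c) (differentiable_mulVec_add_const _ n z), dvg_mulVec_add_const,
    grad_const_mul c hw, smul_dotProduct, hdot, trace_mul_add_vecMulVec, smul_eq_mul]
  ring

/-- the interaction vector field `I(z) = (λ/2) S CᵀC (z+n)` solves the
Poisson equation `−∇·(ρ I) = ρ (h − ĥ)` for the Gaussian density `ρ = N(n, S)`. -/
theorem gaussian_poisson_interaction
    (d k : ℕ)
    (S : Matrix (Fin d) (Fin d) ℝ) (hS : S.PosDef)
    (n : Fin d → ℝ) (C : Matrix (Fin k) (Fin d) ℝ)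
    (lam : ℝ) (hlam : 0 < lam)
    (ρ : (Fin d → ℝ) → ℝ)
    (hρ : ∀ z, ρ z =
      (2 * Real.pi) ^ (-(d : ℝ) / 2) * S.det ^ (-(1 : ℝ) / 2) *
        Real.exp (-(1 / 2) * ((z - n) ⬝ᵥ S⁻¹.mulVec (z - n))))
    (I : (Fin d → ℝ) → (Fin d → ℝ))
    (hI : ∀ z, I z = (lam / 2) • ((S * (Cᵀ * C)).mulVec (z + n)))
    (h : (Fin d → ℝ) → ℝ)
    (hh : ∀ z, h z = (lam / 2) * (∑ j, (C.mulVec z j) ^ 2))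
    (hhat : ℝ)
    (hhat_def : hhat = (lam / 2) * ((Cᵀ * C) * (S + Matrix.vecMulVec n n)).trace) :
    ∀ z, -(dvg (fun y => ρ y • I y) z) = ρ z * (h z - hhat) := by
  intro z
  have hsymm : S.IsSymm := by simpa using hS.isHermitian
  have hQ : ((lam / 2) • (Cᵀ * C)).IsSymm :=
    IsSymm.smul (by rw [IsSymm, transpose_mul, transpose_transpose]) _
  have hnorm : ∑ j, (C *ᵥ z) j ^ 2 = z ⬝ᵥ (Cᵀ * C) *ᵥ z := by
    rw [← mulVec_mulVec, dotProduct_transpose_mulVec]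
    simp only [dotProduct, sq]
  simpa only [gaussianWeight, hρ, hI, hh, hhat_def, hnorm, Matrix.mul_smul, Matrix.smul_mul,
    smul_mulVec, dotProduct_smul, trace_smul, smul_eq_mul] using
    gaussian_poisson_interaction_general hsymm hS.det_pos.ne'.isUnit hQ
      ((2 * Real.pi) ^ (-(d : ℝ) / 2) * S.det ^ (-(1 : ℝ) / 2)) n z
end

section
/- Let S ∈ ℝ^{d×d} be symmetric positive definite, n ∈ ℝ^d, Σ ∈ ℝ^{d×d} symmetric, and λ ∈ ℝ. Let ρ : ℝ^d → (0,∞) be the Gaussian density ρ(z) = (2π)^{−d/2} (det S)^{−1/2} exp(−½ (z−n)ᵀ S⁻¹ (z−n)). Define the vector field C(z) := (λ/2) Σ S⁻¹ (z − n). Then for every z ∈ ℝ^d, −∇·(ρ C)(z) = (λ/2) tr(Σ ∇²ρ(z)), where ∇²ρ(z) = ρ(z)(S⁻¹(z−n)(z−n)ᵀS⁻¹ − S⁻¹) is the Hessian of ρ. -/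
open Matrix

/-!
The gradient of a Gaussian with symmetric precision matrix `A` is `∇ρ = -ρ A (z - n)`, so the field
`ρ C` equals `-(λ/2) Σ ∇ρ`. For a constant matrix `M` and a `C²` function `f`, symmetry of second
derivatives gives `∇·(M ∇f) = tr(M ∇²f)`; take `M = -(λ/2) Σ`.
-/

section Calculus

variable {d : ℕ} {f : (Fin d → ℝ) → ℝ} {z : Fin d → ℝ}

theorem grad_comp {g : ℝ → ℝ} {g' : ℝ} (hg : HasDerivAt g g' (f z))
    (hf : DifferentiableAt ℝ f z) : grad (fun y => g (f y)) z = g' • grad f z := by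
  have h : HasFDerivAt (fun y => g (f y)) (g' • fderiv ℝ f z) z :=
    hg.comp_hasFDerivAt z hf.hasFDerivAt
  funext i
  simp [grad, pd, h.fderiv]

theorem differentiableAt_fderiv_of_contDiffAt_two {E F : Type*} [NormedAddCommGroup E]
    [NormedSpace ℝ E] [NormedAddCommGroup F] [NormedSpace ℝ F] {g : E → F} {x : E}
    (hg : ContDiffAt ℝ 2 g x) : DifferentiableAt ℝ (fderiv ℝ g) x :=
  (hg.fderiv_right (m := 1) le_rfl).differentiableAt one_ne_zero

theorem differentiableAt_pd (hf : DifferentiableAt ℝ (fderiv ℝ f) z) (i : Fin d) :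
    DifferentiableAt ℝ (fun y => pd i f y) z :=
  hf.clm_apply (differentiableAt_const _)

theorem hess_apply_eq_fderiv_fderiv (hf : DifferentiableAt ℝ (fderiv ℝ f) z) (i j : Fin d) :
    hess f z i j = fderiv ℝ (fderiv ℝ f) z (Pi.single i 1) (Pi.single j 1) := by
  have h := hf.hasFDerivAt.clm_apply (hasFDerivAt_const (Pi.single j (1 : ℝ)) z)
  simp [hess, pd, h.fderiv]

theorem isSymm_hess (hf : ContDiffAt ℝ 2 f z) : (hess f z).IsSymm := by
  have hf' := differentiableAt_fderiv_of_contDiffAt_two hf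
  have hsymm : IsSymmSndFDerivAt ℝ f z := hf.isSymmSndFDerivAt (by simp)
  refine IsSymm.ext fun i j => ?_
  rw [hess_apply_eq_fderiv_fderiv hf', hess_apply_eq_fderiv_fderiv hf', hsymm]

theorem pd_dotProduct {ι : Type*} [Fintype ι] {u v : (Fin d → ℝ) → ι → ℝ}
    (hu : DifferentiableAt ℝ u z) (hv : DifferentiableAt ℝ v z) (k : Fin d) :
    pd k (fun y => u y ⬝ᵥ v y) z =
      (fun i => pd k (fun y => u y i) z) ⬝ᵥ v z + u z ⬝ᵥ fun i => pd k (fun y => v y i) z := by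
  have h : HasFDerivAt (fun y => u y ⬝ᵥ v y)
      (∑ i, (u z i • fderiv ℝ (fun y => v y i) z + v z i • fderiv ℝ (fun y => u y i) z)) z := by
    simp only [dotProduct]
    exact HasFDerivAt.fun_sum fun i _ =>
      (differentiableAt_pi.1 hu i).hasFDerivAt.fun_mul (differentiableAt_pi.1 hv i).hasFDerivAt
  rw [pd, h.fderiv, add_comm]
  simp [pd, dotProduct, Finset.sum_add_distrib, mul_comm]

theorem pd_mulVec_apply {ι κ : Type*} [Fintype κ] {v : (Fin d → ℝ) → κ → ℝ}
    (hv : DifferentiableAt ℝ v z) (M : Matrix ι κ ℝ) (i : ι) (k : Fin d) :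
    pd k (fun y => (M *ᵥ v y) i) z = M i ⬝ᵥ fun j => pd k (fun y => v y j) z := by
  simp only [mulVec]
  rw [pd_dotProduct (differentiableAt_const (M i)) hv]
  simp [pd, dotProduct]

theorem dvg_mulVec_grad (M : Matrix (Fin d) (Fin d) ℝ) (hf : ContDiffAt ℝ 2 f z) :
    dvg (fun y => M *ᵥ grad f y) z = (M * hess f z).trace := by
  have hf' := differentiableAt_fderiv_of_contDiffAt_two hf
  calc
    dvg (fun y => M *ᵥ grad f y) z = ∑ i, ∑ j, M i j * hess f z i j :=
      Finset.sum_congr rfl fun i _ =>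
        pd_mulVec_apply (differentiableAt_pi.2 (differentiableAt_pd hf')) M i i
    _ = (M * (hess f z)ᵀ).trace := rfl
    _ = (M * hess f z).trace := by rw [isSymm_hess hf]

theorem pd_sub_const (n z : Fin d → ℝ) (k : Fin d) :
    (fun i => pd k (fun y => (y - n) i) z) = Pi.single k 1 := by
  funext i
  have h : HasFDerivAt (fun y : Fin d → ℝ => (y - n) i) (ContinuousLinearMap.proj i) z :=
    (hasFDerivAt_apply (𝕜 := ℝ) i z).sub_const (n i)
  rw [pd, h.fderiv, ContinuousLinearMap.proj_apply]

theorem contDiff_dotProduct_mulVec_sub {ι : Type*} [Fintype ι] {m : WithTop ℕ∞} (A : Matrix ι ι ℝ)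
    (n : ι → ℝ) : ContDiff ℝ m fun y : ι → ℝ => (y - n) ⬝ᵥ A *ᵥ (y - n) := by
  simp only [mulVec, dotProduct, Pi.sub_apply]
  fun_prop

theorem grad_dotProduct_mulVec_sub (A : Matrix (Fin d) (Fin d) ℝ) (n z : Fin d → ℝ) :
    grad (fun y => (y - n) ⬝ᵥ A *ᵥ (y - n)) z = (A + Aᵀ) *ᵥ (z - n) := by
  have hsub : DifferentiableAt ℝ (fun y : Fin d → ℝ => y - n) z := by fun_prop
  have hmulVec : DifferentiableAt ℝ (fun y => A *ᵥ (y - n)) z :=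
    A.mulVecLin.toContinuousLinearMap.differentiableAt.comp z hsub
  funext k
  have hcol : (fun i => pd k (fun y => (A *ᵥ (y - n)) i) z) = A.col k := by
    funext i
    rw [pd_mulVec_apply hsub, pd_sub_const, dotProduct_single_one, col_apply]
  calc
    grad (fun y => (y - n) ⬝ᵥ A *ᵥ (y - n)) z k
        = Pi.single k 1 ⬝ᵥ A *ᵥ (z - n) + (z - n) ⬝ᵥ A.col k := by
      rw [grad, pd_dotProduct hsub hmulVec, pd_sub_const, hcol]
    _ = ((A + Aᵀ) *ᵥ (z - n)) k := by
      rw [single_one_dotProduct, dotProduct_comm, add_mulVec]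
      rfl

end Calculus

section Gaussian

variable {ι : Type*} [Fintype ι]

/-- The unnormalised Gaussian with centre `n`, amplitude `c` and precision (inverse covariance)
matrix `A`. Taking the precision rather than the covariance as parameter makes sense of every
square matrix `A`, definite or not. -/
noncomputable def gaussian (A : Matrix ι ι ℝ) (n : ι → ℝ) (c : ℝ) (z : ι → ℝ) : ℝ :=
  c * Real.exp (-(1 / 2) * ((z - n) ⬝ᵥ A *ᵥ (z - n)))

theorem contDiff_gaussian {m : WithTop ℕ∞} (A : Matrix ι ι ℝ) (n : ι → ℝ) (c : ℝ) :
    ContDiff ℝ m (gaussian A n c) :=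
  contDiff_const.mul (contDiff_const.mul (contDiff_dotProduct_mulVec_sub A n)).exp

theorem grad_gaussian {d : ℕ} {A : Matrix (Fin d) (Fin d) ℝ} (hA : A.IsSymm) (n : Fin d → ℝ)
    (c : ℝ) (z : Fin d → ℝ) :
    grad (gaussian A n c) z = -(gaussian A n c z • A *ᵥ (z - n)) := by
  have hg : HasDerivAt (fun t => c * Real.exp (-(1 / 2) * t))
      (-(1 / 2) * gaussian A n c z) ((z - n) ⬝ᵥ A *ᵥ (z - n)) :=
    ((hasDerivAt_const_mul (-(1 / 2) : ℝ)).exp.const_mul c).congr_deriv (by rw [gaussian]; ring)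
  have hq : DifferentiableAt ℝ (fun y => (y - n) ⬝ᵥ A *ᵥ (y - n)) z :=
    (contDiff_dotProduct_mulVec_sub A n).differentiable one_ne_zero z
  calc
    grad (gaussian A n c) z = (-(1 / 2) * gaussian A n c z) • (A + Aᵀ) *ᵥ (z - n) := by
      rw [← grad_dotProduct_mulVec_sub]
      exact grad_comp (f := fun y => (y - n) ⬝ᵥ A *ᵥ (y - n)) hg hq
    _ = -(gaussian A n c z • A *ᵥ (z - n)) := by
      rw [hA.eq, ← two_smul ℝ A, smul_mulVec, smul_smul, ← neg_smul]
      ring_nf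

end Gaussian

theorem gaussian_poisson_correction_general {d : ℕ} {A : Matrix (Fin d) (Fin d) ℝ}
    (hA : A.IsSymm) (n : Fin d → ℝ) (c : ℝ) (M : Matrix (Fin d) (Fin d) ℝ) (lam : ℝ)
    (z : Fin d → ℝ) :
    -(dvg (fun y => gaussian A n c y • (lam / 2) • (M * A) *ᵥ (y - n)) z) =
      (lam / 2) * (M * hess (gaussian A n c) z).trace := by
  have hfield : (fun y => gaussian A n c y • (lam / 2) • (M * A) *ᵥ (y - n)) =
      fun y => (-(lam / 2) • M) *ᵥ grad (gaussian A n c) y := by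
    funext y
    rw [grad_gaussian hA, mulVec_neg, mulVec_smul, smul_mulVec, mulVec_mulVec, neg_smul, smul_neg,
      neg_neg]
  rw [hfield, dvg_mulVec_grad _ (contDiff_gaussian A n c).contDiffAt, smul_mul, trace_smul,
    smul_eq_mul, neg_mul, neg_neg]

/-- the correction vector field `C(z) = (λ/2) Σ S⁻¹ (z−n)` satisfies
`−∇·(ρ C) = (λ/2) tr(Σ ∇²ρ)` for the Gaussian density `ρ = N(n, S)`. -/
theorem gaussian_poisson_correction
    (d : ℕ)
    (S : Matrix (Fin d) (Fin d) ℝ) (hS : S.PosDef)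
    (n : Fin d → ℝ)
    (Sig : Matrix (Fin d) (Fin d) ℝ) (hSig : Sig.IsSymm)
    (lam : ℝ)
    (ρ : (Fin d → ℝ) → ℝ)
    (hρ : ∀ z, ρ z =
      (2 * Real.pi) ^ (-(d : ℝ) / 2) * S.det ^ (-(1 : ℝ) / 2) *
        Real.exp (-(1 / 2) * ((z - n) ⬝ᵥ S⁻¹.mulVec (z - n))))
    (Cf : (Fin d → ℝ) → (Fin d → ℝ))
    (hC : ∀ z, Cf z = (lam / 2) • ((Sig * S⁻¹).mulVec (z - n))) :
    ∀ z, -(dvg (fun y => ρ y • Cf y) z) = (lam / 2) * (Sig * hess ρ z).trace := by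
  obtain rfl : ρ = gaussian S⁻¹ n _ := funext hρ
  simpa only [hC] using
    gaussian_poisson_correction_general (isHermitian_iff_isSymm.1 hS.isHermitian).inv n _ Sig lam
end
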